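/- As an exact category, V_p^n has enough injectives, and the following are equivalent for an object B of V_p^n: (1) B is injective with respect to the exact structure of V_p^n; (2) v(x) = h(x) for all x ∈ B, where h is the p-height; (3) B(i) = pⁱ·B for each 0 ≤ i ≤ n. -/

import Mathlib

namespace PVal

/-- A `p`-valuated abelian group whose nonzero elements have value at most `n-1`:
an object of the category `𝒱ₚⁿ`. -/
structure ValGroup (p n : ℕ) where
  B : Type
  [acg : AddCommGroup B]
  v : B → ℕ∞
  add_le : ∀ x y : B, min (v x) (v y) ≤ v (x + y)
  smul_lt : ∀ x : B, v x < v (p • x) ∨ (v x = ⊤ ∧ v (p • x) = ⊤)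
  bounded : ∀ x : B, x ≠ 0 → v x ≤ ((n - 1 : ℕ) : ℕ∞)

attribute [instance] ValGroup.acg

/-- A morphism of `p`-valuated abelian groups. -/
@[ext]
structure ValHom {p n : ℕ} (A B : ValGroup p n) where
  f : A.B →+ B.B
  le : ∀ x, A.v x ≤ B.v (f x)

theorem ValGroup.v_zero {p n : ℕ} (A : ValGroup p n) : A.v 0 = ⊤ := by
  rcases A.smul_lt 0 with h | h
  · rw [smul_zero] at h
    exact absurd h (lt_irrefl _)
  · exact h.1

namespace ValHom

variable {p n : ℕ} {A B C D : ValGroup p n}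

def id (A : ValGroup p n) : ValHom A A :=
  ⟨AddMonoidHom.id A.B, fun _ => le_rfl⟩

def comp (g : ValHom B C) (f : ValHom A B) : ValHom A C :=
  ⟨g.f.comp f.f, fun x => (f.le x).trans (g.le (f.f x))⟩

instance : Zero (ValHom A B) :=
  ⟨⟨0, fun x => by simp [ValGroup.v_zero]⟩⟩

end ValHom

variable {p n : ℕ}

/-- `ι` is a kernel of `ψ`. -/
def IsKernelOf {K A B : ValGroup p n} (ι : ValHom K A) (ψ : ValHom A B) : Prop :=
  ψ.comp ι = 0 ∧
    ∀ (C : ValGroup p n) (ρ : ValHom C A), ψ.comp ρ = 0 →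
      ∃! σ : ValHom C K, ι.comp σ = ρ

/-- `π` is a cokernel of `ψ`. -/
def IsCokernelOf {A B Q : ValGroup p n} (π : ValHom B Q) (ψ : ValHom A B) : Prop :=
  π.comp ψ = 0 ∧
    ∀ (C : ValGroup p n) (ρ : ValHom B C), ρ.comp ψ = 0 →
      ∃! σ : ValHom Q C, σ.comp π = ρ

/-- A morphism which occurs as a kernel. -/
def IsKernelMor {A B : ValGroup p n} (φ : ValHom A B) : Prop :=
  ∃ (C : ValGroup p n) (ψ : ValHom B C), IsKernelOf φ ψ

/-- A morphism which occurs as a cokernel. -/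
def IsCokernelMor {A B : ValGroup p n} (φ : ValHom A B) : Prop :=
  ∃ (C : ValGroup p n) (ψ : ValHom C A), IsCokernelOf φ ψ

/-- A kernel–cokernel pair (conflation). -/
def IsConflation {A B C : ValGroup p n} (φ : ValHom A B) (ψ : ValHom B C) : Prop :=
  IsKernelOf φ ψ ∧ IsCokernelOf ψ φ

end PVal

namespace PVal

/-- Injectivity with respect to the exact structure of `𝒱ₚⁿ` (whose inflations are the
kernels): morphisms into `J` extend along inflations. -/
def IsInjObj {p n : ℕ} (J : ValGroup p n) : Prop :=
  ∀ (A B : ValGroup p n) (ι : ValHom A B), IsKernelMor ι →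
    ∀ g : ValHom A J, ∃ h : ValHom B J, h.comp ι = g

/-- The `p`-height of an element of an abelian group: the largest `m` such that `x` is
divisible by `p^m`, and `∞` if there is no largest such `m`. -/
noncomputable def pHeight (p : ℕ) {G : Type} [AddCommGroup G] (x : G) : ℕ∞ :=
  ⨆ (m : ℕ) (_ : ∃ y : G, p ^ m • y = x), (m : ℕ∞)

end PVal

/-!
The inflations of `𝒱ₚⁿ` are the isometric homomorphisms: a kernel carries the restricted
valuation, and conversely an isometry is the kernel of the quotient by its image, a coset being
valued by its largest representative.

If the valuation of `J` is its height, a morphism into `J` defined on a subgroup `D` of `A` with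
`D ≠ A` extends to some `b ∉ D` with `p • b ∈ D`: the image `d` of `p • b` has height at least
`v b + 1`, so `d = p • c` with `v b ≤ v c`, and `b ↦ c` is a legitimate choice once `b` has maximal
value in its coset `b + D`. Zorn's lemma then shows that `J` is injective.

For `x` of value `m`, extending the map which kills `A(m + 1)` and sends `x` to `pᵐ` gives a
morphism to `ℤ/pᵐ⁺¹` preserving the value of `x`. The product of these morphisms embeds `A`
isometrically into an object valued by the height; if `A` is injective, it is a retract of that
object and hence valued by the height itself.
-/

namespace PVal

theorem lt_or_eq_top_of_add_one_le {a b : ℕ∞} (h : a + 1 ≤ b) : a < b ∨ (a = ⊤ ∧ b = ⊤) := by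
  rcases eq_or_ne a ⊤ with rfl | ha
  · exact .inr ⟨rfl, top_le_iff.mp (by simpa only [top_add] using h)⟩
  · exact .inl ((ENat.add_one_le_iff ha).mp h)

theorem mem_of_pow_smul_mem {M α σ : Type*} [Monoid M] [MulAction M α] [SetLike σ α] {a : M} {S : σ}
    (hS : ∀ x : α, a • x ∈ S → x ∈ S) (k : ℕ) {x : α} (hx : a ^ k • x ∈ S) : x ∈ S := by
  induction k with
  | zero => rwa [pow_zero, one_smul] at hx
  | succ k ih => exact ih (hS _ (by rwa [← mul_smul, ← pow_succ']))

theorem mem_of_zsmul_mem_of_smul_mem {p : ℕ} [Fact p.Prime] {G : Type*} [AddCommGroup G]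
    {S : AddSubgroup G} {k : ℤ} (hk : ¬ (p : ℤ) ∣ k) {x : G} (hkx : k • x ∈ S)
    (hpx : p • x ∈ S) : x ∈ S := by
  obtain ⟨a, b, hab⟩ : IsCoprime (p : ℤ) k :=
    (Nat.prime_iff_prime_int.mp Fact.out).coprime_iff_not_dvd.mpr hk
  have hx : x = a • p • x + b • k • x := by
    rw [← natCast_zsmul x p, ← mul_smul, ← mul_smul, ← add_smul, hab, one_smul]
  exact hx ▸ S.add_mem (S.zsmul_mem hpx a) (S.zsmul_mem hkx b)

section Height

variable {p : ℕ} {G : Type} [AddCommGroup G]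

theorem natCast_le_pHeight_iff {x : G} {i : ℕ} :
    (i : ℕ∞) ≤ pHeight p x ↔ ∃ y : G, p ^ i • y = x := by
  refine ⟨fun h => ?_, fun h => le_iSup₂ (f := fun (m : ℕ) _ => (m : ℕ∞)) i h⟩
  cases i with
  | zero => exact ⟨x, by rw [pow_zero, one_smul]⟩
  | succ i =>
    obtain ⟨m, ⟨y, rfl⟩, him⟩ : ∃ m : ℕ, ∃ _ : ∃ y : G, p ^ m • y = x, (i : ℕ∞) < m := by
      simpa only [pHeight, lt_iSup_iff] using ENat.natCast_add_one_le_iff.mp h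
    obtain ⟨k, rfl⟩ := Nat.exists_eq_add_of_le (Nat.succ_le_of_lt (Nat.cast_lt.mp him))
    exact ⟨p ^ k • y, by rw [← mul_smul, ← pow_add]⟩

theorem min_pHeight_le_pHeight_add (x y : G) :
    min (pHeight p x) (pHeight p y) ≤ pHeight p (x + y) := by
  refine ENat.forall_natCast_le_iff_le.mp fun i hi => ?_
  obtain ⟨a, ha⟩ := natCast_le_pHeight_iff.mp (hi.trans (min_le_left _ _))
  obtain ⟨b, hb⟩ := natCast_le_pHeight_iff.mp (hi.trans (min_le_right _ _))
  exact natCast_le_pHeight_iff.mpr ⟨a + b, by rw [smul_add, ha, hb]⟩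

theorem pHeight_add_one_le_pHeight_smul (x : G) : pHeight p x + 1 ≤ pHeight p (p • x) := by
  refine ENat.forall_natCast_le_iff_le.mp fun i hi => ?_
  cases i with
  | zero => exact zero_le
  | succ i =>
    rw [Nat.cast_succ, ENat.add_le_add_iff_right ENat.one_ne_top] at hi
    obtain ⟨y, rfl⟩ := natCast_le_pHeight_iff.mp hi
    exact natCast_le_pHeight_iff.mpr ⟨y, by rw [pow_succ', mul_smul]⟩

theorem pow_smul_zmod_eq_zero {m k : ℕ} (h : m ≤ k) (y : ZMod (p ^ m)) : p ^ k • y = 0 := by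
  obtain ⟨l, rfl⟩ := Nat.exists_eq_add_of_le' h
  rw [pow_add, mul_smul, ZModModule.char_nsmul_eq_zero (p ^ m), smul_zero]

theorem pHeight_pow_smul_one_zmod (hp : 1 < p) (m : ℕ) :
    pHeight p (p ^ m • (1 : ZMod (p ^ (m + 1)))) = m := by
  refine le_antisymm ?_ (natCast_le_pHeight_iff.mpr ⟨1, rfl⟩)
  by_contra! hlt
  obtain ⟨y, hy⟩ := natCast_le_pHeight_iff.mp (ENat.natCast_add_one_le_iff.mpr hlt)
  rw [pow_smul_zmod_eq_zero le_rfl, eq_comm, nsmul_one, ZMod.natCast_eq_zero_iff,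
    Nat.pow_dvd_pow_iff_le_right hp] at hy
  exact m.lt_succ_self.not_ge hy

end Height

variable {p n : ℕ}

theorem ValHom.congr_fun {A B : ValGroup p n} {φ ψ : ValHom A B} (h : φ = ψ) (x : A.B) :
    φ.f x = ψ.f x :=
  h ▸ rfl

namespace ValGroup

variable (A : ValGroup p n)

theorem eq_zero_of_lt_v {x : A.B} (h : ((n - 1 : ℕ) : ℕ∞) < A.v x) : x = 0 :=
  by_contra fun hx => h.not_ge (A.bounded x hx)

theorem eq_zero_of_v_eq_top {x : A.B} (h : A.v x = ⊤) : x = 0 :=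
  A.eq_zero_of_lt_v (h ▸ ENat.natCast_lt_top _)

theorem v_le_v_nsmul (k : ℕ) (x : A.B) : A.v x ≤ A.v (k • x) := by
  induction k with
  | zero => rw [zero_smul, A.v_zero]; exact le_top
  | succ k ih => rw [succ_nsmul]; exact (le_min ih le_rfl).trans (A.add_le _ _)

theorem v_add_one_le_v_smul (x : A.B) : A.v x + 1 ≤ A.v (p • x) := by
  rcases A.smul_lt x with h | ⟨-, h⟩
  · exact Order.add_one_le_of_lt h
  · exact h ▸ le_top

theorem natCast_le_v_pow_smul (i : ℕ) (x : A.B) : (i : ℕ∞) ≤ A.v (p ^ i • x) := by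
  induction i with
  | zero => exact zero_le
  | succ i ih =>
    rw [pow_succ', mul_smul, Nat.cast_succ]
    exact (add_le_add_left ih 1).trans (A.v_add_one_le_v_smul _)

theorem pow_smul_eq_zero (x : A.B) : p ^ (n - 1 + 1) • x = 0 :=
  A.eq_zero_of_lt_v ((Nat.cast_lt.mpr (n - 1).lt_succ_self).trans_le (A.natCast_le_v_pow_smul _ x))

theorem pHeight_le_v (x : A.B) : pHeight p x ≤ A.v x := by
  refine ENat.forall_natCast_le_iff_le.mp fun i hi => ?_
  obtain ⟨y, rfl⟩ := natCast_le_pHeight_iff.mp hi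
  exact A.natCast_le_v_pow_smul i y

theorem v_le_v_neg [NeZero p] (x : A.B) : A.v x ≤ A.v (-x) := by
  have hneg : (p ^ (n - 1 + 1) - 1) • x = -x := by
    rw [eq_neg_iff_add_eq_zero, ← succ_nsmul,
      Nat.sub_add_cancel (Nat.one_le_pow _ _ (NeZero.pos p)), A.pow_smul_eq_zero]
  exact hneg ▸ A.v_le_v_nsmul _ x

theorem exists_forall_v_le {S : Set A.B} (hS : S.Nonempty) : ∃ b ∈ S, ∀ c ∈ S, A.v c ≤ A.v b := by
  by_cases h0 : (0 : A.B) ∈ S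
  · exact ⟨0, h0, fun c _ => A.v_zero ▸ le_top⟩
  have : Nonempty S := hS.to_subtype
  have hlt : ⨆ c : S, A.v c < ⊤ :=
    (iSup_le fun c : S => A.bounded c fun hc => h0 (hc ▸ c.2)).trans_lt (ENat.natCast_lt_top _)
  obtain ⟨b, hb⟩ := ENat.exists_eq_iSup_of_lt_top hlt
  exact ⟨b, b.2, fun c hc => hb ▸ le_iSup (fun c : S => A.v c) ⟨c, hc⟩⟩

/-- The subgroup of the elements of value at least `a`; for `a = i` this is the paper's `B(i)`. -/
def filtration [NeZero p] (a : ℕ∞) : AddSubgroup A.B where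
  carrier := {x | a ≤ A.v x}
  zero_mem' := le_top.trans A.v_zero.ge
  add_mem' hx hy := (le_min hx hy).trans (A.add_le _ _)
  neg_mem' {x} hx := le_trans hx (A.v_le_v_neg x)

/-- A subgroup with the restricted valuation. -/
def ofAddSubgroup (S : AddSubgroup A.B) : ValGroup p n where
  B := S
  v x := A.v x
  add_le x y := A.add_le x y
  smul_lt x := A.smul_lt x
  bounded x hx := A.bounded x fun h => hx (Subtype.ext h)

section Quotient

variable (S : AddSubgroup A.B)

theorem exists_maximal_rep (q : A.B ⧸ S) :
    ∃ b : A.B, (b : A.B ⧸ S) = q ∧ ∀ c : A.B, (c : A.B ⧸ S) = q → A.v c ≤ A.v b :=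
  A.exists_forall_v_le (S := {b | (b : A.B ⧸ S) = q}) (QuotientAddGroup.mk_surjective q)

/-- A representative of maximal value of a coset. -/
noncomputable def maxRep (q : A.B ⧸ S) : A.B := (A.exists_maximal_rep S q).choose

theorem mk_maxRep (q : A.B ⧸ S) : (A.maxRep S q : A.B ⧸ S) = q :=
  (A.exists_maximal_rep S q).choose_spec.1

theorem v_le_v_maxRep {q : A.B ⧸ S} {b : A.B} (hb : (b : A.B ⧸ S) = q) :
    A.v b ≤ A.v (A.maxRep S q) :=
  (A.exists_maximal_rep S q).choose_spec.2 b hb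

/-- The quotient by a subgroup; the value of a coset is the largest value of its elements. -/
noncomputable def quotient : ValGroup p n where
  B := A.B ⧸ S
  v q := A.v (A.maxRep S q)
  add_le q r := (A.add_le _ _).trans <| A.v_le_v_maxRep S <| by
    rw [QuotientAddGroup.mk_add, mk_maxRep, mk_maxRep]
  smul_lt q := lt_or_eq_top_of_add_one_le <|
    (A.v_add_one_le_v_smul _).trans <| A.v_le_v_maxRep S <| by
      rw [QuotientAddGroup.mk_nsmul, mk_maxRep]
  bounded q hq := A.bounded _ fun h => hq <| by
    rw [← A.mk_maxRep S q, h, QuotientAddGroup.mk_zero]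

/-- The projection onto the quotient by a subgroup. -/
noncomputable def quotientMk : ValHom A (A.quotient S) where
  f := QuotientAddGroup.mk' S
  le _ := A.v_le_v_maxRep S rfl

end Quotient

/-- The product of a family of objects, with the infimum of the values of the coordinates. -/
noncomputable def pi {ι : Type} (J : ι → ValGroup p n) : ValGroup p n where
  B := ∀ i, (J i).B
  v x := ⨅ i, (J i).v (x i)
  add_le _ _ := le_iInf fun i =>
    (min_le_min (iInf_le _ i) (iInf_le _ i)).trans ((J i).add_le _ _)
  smul_lt x := lt_or_eq_top_of_add_one_le <| le_iInf fun i =>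
    (add_le_add_left (iInf_le _ i) 1).trans ((J i).v_add_one_le_v_smul (x i))
  bounded _ hx :=
    have ⟨i, hi⟩ := Function.ne_iff.mp hx
    (iInf_le _ i).trans ((J i).bounded _ hi)

/-- A group of exponent dividing a power of `p`, valued by the height. The exponent is
`n - 1 + 1` rather than `n` because the bound `n - 1` on the values is truncated at `n = 0`. -/
noncomputable def ofHeight (G : Type) [AddCommGroup G] (hG : ∀ x : G, p ^ (n - 1 + 1) • x = 0) :
    ValGroup p n where
  B := G
  v := pHeight p
  add_le := min_pHeight_le_pHeight_add
  smul_lt x := lt_or_eq_top_of_add_one_le (pHeight_add_one_le_pHeight_smul x)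
  bounded x hx := by
    by_contra! hlt
    obtain ⟨y, hy⟩ := natCast_le_pHeight_iff.mp (ENat.natCast_add_one_le_iff.mpr hlt)
    exact hx (hy ▸ hG y)

end ValGroup

section Inflation

variable {A B : ValGroup p n} {ι : ValHom A B}

theorem v_map_eq_of_isKernelMor (hι : IsKernelMor ι) (x : A.B) : B.v (ι.f x) = A.v x := by
  obtain ⟨C, ψ, hψι, lift⟩ := hι
  let K : ValGroup p n := B.ofAddSubgroup ψ.f.ker
  let incl : ValHom K B := ⟨ψ.f.ker.subtype, fun _ => le_rfl⟩
  let corestrict : ValHom A K := ⟨ι.f.codRestrict ψ.f.ker (ValHom.congr_fun hψι), ι.le⟩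
  obtain ⟨σ, hσ, -⟩ := lift K incl (ValHom.ext (AddMonoidHom.ext fun y => y.2))
  have hσ_left : σ.comp corestrict = ValHom.id A :=
    (lift A ι hψι).unique
      (ValHom.ext (AddMonoidHom.ext fun a => ValHom.congr_fun hσ (corestrict.f a))) rfl
  refine le_antisymm ?_ (ι.le x)
  calc B.v (ι.f x) ≤ A.v (σ.f (corestrict.f x)) := σ.le (corestrict.f x)
    _ = A.v x := congrArg A.v (ValHom.congr_fun hσ_left x)

theorem isKernelMor_of_v_map_eq (hι : ∀ x, B.v (ι.f x) = A.v x) : IsKernelMor ι := by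
  have ι_inj : Function.Injective ι.f := (injective_iff_map_eq_zero _).mpr fun x hx =>
    A.eq_zero_of_v_eq_top (by rw [← hι, hx, B.v_zero])
  refine ⟨B.quotient ι.f.range, B.quotientMk ι.f.range, ?_, fun C ρ hρ => ?_⟩
  · ext x
    exact (QuotientAddGroup.eq_zero_iff _).mpr ⟨x, rfl⟩
  · have hρ_range (c : C.B) : ρ.f c ∈ ι.f.range :=
      (QuotientAddGroup.eq_zero_iff _).mp (ValHom.congr_fun hρ c)
    let σ : C.B →+ A.B :=
      (AddMonoidHom.ofInjective ι_inj).symm.toAddMonoidHom.comp (ρ.f.codRestrict _ hρ_range)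
    have ι_σ (c : C.B) : ι.f (σ c) = ρ.f c :=
      AddMonoidHom.apply_ofInjective_symm ι_inj ⟨ρ.f c, hρ_range c⟩
    refine ⟨⟨σ, fun c => ?_⟩, ValHom.ext (AddMonoidHom.ext ι_σ), fun τ hτ => ?_⟩
    · rw [← hι, ι_σ]
      exact ρ.le c
    · ext c
      exact ι_inj ((ValHom.congr_fun hτ c).trans (ι_σ c).symm)

end Inflation

/-- The valuation of `J` is the height; this will characterize the injective objects. -/
def IsHeightValued (J : ValGroup p n) : Prop :=
  ∀ x : J.B, J.v x = pHeight p x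

theorem isHeightValued_iff {J : ValGroup p n} :
    IsHeightValued J ↔ ∀ (i : ℕ) (x : J.B), (i : ℕ∞) ≤ J.v x → ∃ y : J.B, p ^ i • y = x := by
  refine ⟨fun hJ i x hi => natCast_le_pHeight_iff.mp (hJ x ▸ hi), fun hJ x => ?_⟩
  refine le_antisymm (ENat.forall_natCast_le_iff_le.mp fun i hi => ?_) (J.pHeight_le_v x)
  exact natCast_le_pHeight_iff.mpr (hJ i x hi)

theorem isHeightValued_iff_le (hn : 1 ≤ n) {J : ValGroup p n} :
    IsHeightValued J ↔ ∀ i : ℕ, i ≤ n → ∀ x : J.B,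
      ((i : ℕ∞) ≤ J.v x ↔ ∃ y : J.B, p ^ i • y = x) := by
  refine ⟨fun hJ i _ x => by rw [hJ x, natCast_le_pHeight_iff], fun hJ => ?_⟩
  refine isHeightValued_iff.mpr fun i x hi => ?_
  rcases le_or_gt i n with hin | hni
  · exact (hJ i hin x).mp hi
  · have hx : x = 0 := J.eq_zero_of_lt_v (lt_of_lt_of_le (Nat.cast_lt.mpr (by omega)) hi)
    exact ⟨0, by rw [smul_zero, hx]⟩

namespace IsHeightValued

theorem ofHeight {G : Type} [AddCommGroup G] (hG : ∀ x : G, p ^ (n - 1 + 1) • x = 0) :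
    IsHeightValued (ValGroup.ofHeight G hG) :=
  fun _ => rfl

theorem pi {ι : Type} {J : ι → ValGroup p n} (hJ : ∀ i, IsHeightValued (J i)) :
    IsHeightValued (ValGroup.pi J) := by
  refine isHeightValued_iff.mpr fun k x hk => ?_
  choose y hy using fun i => isHeightValued_iff.mp (hJ i) k (x i) (hk.trans (iInf_le _ i))
  exact ⟨y, funext hy⟩

theorem exists_smul_eq {J : ValGroup p n} (hJ : IsHeightValued J) {a : ℕ∞} {d : J.B}
    (hd : a + 1 ≤ J.v d) : ∃ c, a ≤ J.v c ∧ p • c = d := by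
  induction a using ENat.recTopCoe with
  | top =>
    have hd0 : d = 0 := J.eq_zero_of_v_eq_top (top_le_iff.mp (by simpa only [top_add] using hd))
    exact ⟨0, le_top.trans J.v_zero.ge, by rw [smul_zero, hd0]⟩
  | coe m =>
    obtain ⟨e, rfl⟩ := isHeightValued_iff.mp hJ (m + 1) d (by exact_mod_cast hd)
    exact ⟨p ^ m • e, J.natCast_le_v_pow_smul m e, by rw [← mul_smul, ← pow_succ']⟩

end IsHeightValued

/-- The domain of the relation between `M` and `N` whose graph is `G`. -/
abbrev domain {M N : Type*} [AddCommGroup M] [AddCommGroup N] (G : AddSubgroup (M × N)) :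
    AddSubgroup M :=
  G.map (AddMonoidHom.fst M N)

/-- `G` is the graph of a morphism to `J` from a subgroup of `A`. That the relation `G` is
single-valued is automatic, since `0` is the only element of value `∞`. -/
def IsPartialHom {A J : ValGroup p n} (G : AddSubgroup (A.B × J.B)) : Prop :=
  ∀ z ∈ G, A.v z.1 ≤ J.v z.2

namespace IsPartialHom

variable {A J : ValGroup p n} {G : AddSubgroup (A.B × J.B)}

theorem eq_of_mem (hG : IsPartialHom G) {x : A.B} {y y' : J.B} (h : (x, y) ∈ G)
    (h' : (x, y') ∈ G) : y = y' := by
  have hle : A.v (x - x) ≤ J.v (y - y') := hG _ (G.sub_mem h h')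
  rw [sub_self, A.v_zero, top_le_iff] at hle
  exact sub_eq_zero.mp (J.eq_zero_of_v_eq_top hle)

theorem exists_valHom (hG : IsPartialHom G) (hdom : domain G = ⊤) :
    ∃ φ : ValHom A J, ∀ z ∈ G, φ.f z.1 = z.2 := by
  have total (x : A.B) : ∃ y, (x, y) ∈ G := by
    obtain ⟨⟨_, y⟩, hy, rfl⟩ := hdom ▸ AddSubgroup.mem_top x
    exact ⟨y, hy⟩
  choose f hf using total
  exact ⟨⟨AddMonoidHom.mk' f fun x y => hG.eq_of_mem (hf _) (G.add_mem (hf x) (hf y)),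
    fun x => hG _ (hf x)⟩, fun z hz => hG.eq_of_mem (hf _) hz⟩

theorem exists_le_maximal (hG : IsPartialHom G) :
    ∃ M : AddSubgroup (A.B × J.B), G ≤ M ∧ Maximal IsPartialHom M := by
  refine zorn_le_nonempty₀ {M | IsPartialHom M} (fun c hc chain M hM => ?_) G hG
  refine ⟨sSup c, fun z hz => ?_, fun _ => le_sSup⟩
  obtain ⟨N, hN, hzN⟩ := (AddSubgroup.mem_sSup_of_directedOn ⟨M, hM⟩ chain.directedOn).mp hz
  exact hc hN z hzN

variable [Fact p.Prime]

theorem sup_zmultiples (hG : IsPartialHom G) {b : A.B} {c : J.B} (hbc : p • (b, c) ∈ G)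
    (hb : ∀ a ∈ domain G, A.v (b + a) ≤ A.v b) (hle : A.v b ≤ J.v c) :
    IsPartialHom (G ⊔ AddSubgroup.zmultiples (b, c)) := by
  intro z hz
  obtain ⟨⟨x, y⟩, hxy, w, hw, rfl⟩ := AddSubgroup.mem_sup.mp hz
  obtain ⟨k, rfl⟩ := AddSubgroup.mem_zmultiples_iff.mp hw
  by_cases hk : (p : ℤ) ∣ k
  · obtain ⟨l, rfl⟩ := hk
    refine hG _ (G.add_mem hxy ?_)
    rw [mul_comm, mul_smul, natCast_zsmul]
    exact G.zsmul_mem hbc l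
  change A.v (x + k • b) ≤ J.v (y + k • c)
  set a := A.v (x + k • b) with ha
  have hx_dom : x ∈ domain G := ⟨_, hxy, rfl⟩
  have hb_sup : b ∈ domain G ⊔ A.filtration a := by
    refine mem_of_zsmul_mem_of_smul_mem hk ?_ (AddSubgroup.mem_sup_left ⟨_, hbc, rfl⟩)
    rw [← neg_add_cancel_left x (k • b)]
    exact AddSubgroup.add_mem_sup (neg_mem hx_dom) ha.le
  have hab : a ≤ A.v b := by
    obtain ⟨d, hd, e, he, rfl⟩ := AddSubgroup.mem_sup.mp hb_sup
    refine le_trans he (le_trans (le_of_eq ?_) (hb (-d) (neg_mem hd)))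
    rw [add_comm d e, add_neg_cancel_right]
  have hax : a ≤ A.v x := by
    rw [← add_sub_cancel_right x (k • b)]
    exact (A.filtration a).sub_mem ha.le ((A.filtration a).zsmul_mem hab k)
  exact (J.filtration a).add_mem (hax.trans (hG _ hxy))
    ((J.filtration a).zsmul_mem (hab.trans hle) k)

theorem exists_le_mem_domain (hG : IsPartialHom G) (hJ : IsHeightValued J) {x : A.B}
    (hx : p • x ∈ domain G) : ∃ G', IsPartialHom G' ∧ G ≤ G' ∧ x ∈ domain G' := by
  obtain ⟨b, hbx, hb_max⟩ := A.exists_forall_v_le (S := {b | b - x ∈ domain G})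
    ⟨x, by simp only [Set.mem_ofPred_eq, sub_self, zero_mem]⟩
  have hpb : p • b ∈ domain G := by
    rw [← sub_add_cancel b x, smul_add]
    exact add_mem (nsmul_mem hbx p) hx
  obtain ⟨⟨_, d⟩, hd, rfl : _ = p • b⟩ := hpb
  obtain ⟨c, hbc, rfl⟩ := hJ.exists_smul_eq ((A.v_add_one_le_v_smul b).trans (hG _ hd))
  have hb_coset (a : A.B) (ha : a ∈ domain G) : A.v (b + a) ≤ A.v b :=
    hb_max _ (by rw [Set.mem_ofPred_eq, add_sub_right_comm]; exact add_mem hbx ha)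
  refine ⟨_, hG.sup_zmultiples hd hb_coset hbc, le_sup_left, ?_⟩
  rw [domain, AddSubgroup.map_sup, ← sub_sub_cancel b x]
  exact sub_mem
    (AddSubgroup.mem_sup_right ⟨(b, c), AddSubgroup.mem_zmultiples _, rfl⟩)
    (AddSubgroup.mem_sup_left hbx)

theorem exists_extension (hG : IsPartialHom G) (hJ : IsHeightValued J) :
    ∃ φ : ValHom A J, ∀ z ∈ G, φ.f z.1 = z.2 := by
  obtain ⟨M, hGM, hM⟩ := hG.exists_le_maximal
  have hclosed (x : A.B) (hx : p • x ∈ domain M) : x ∈ domain M := by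
    obtain ⟨M', hM', hle, hxM'⟩ := hM.prop.exists_le_mem_domain hJ hx
    exact AddSubgroup.map_mono (hM.le_of_ge hM' hle) hxM'
  have hdom : domain M = ⊤ := (AddSubgroup.eq_top_iff' _).mpr fun x =>
    have hx : p ^ (n - 1 + 1) • x ∈ domain M := A.pow_smul_eq_zero x ▸ zero_mem _
    mem_of_pow_smul_mem hclosed _ hx
  obtain ⟨φ, hφ⟩ := hM.prop.exists_valHom hdom
  exact ⟨φ, fun z hz => hφ z (hGM hz)⟩

end IsPartialHom

variable [Fact p.Prime]

theorem IsHeightValued.isInjObj {J : ValGroup p n} (hJ : IsHeightValued J) : IsInjObj J := by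
  intro A B ι hι g
  have hG : IsPartialHom (A := B) (J := J) (ι.f.prod g.f).range := by
    rintro _ ⟨a, rfl⟩
    exact (v_map_eq_of_isKernelMor hι a).trans_le (g.le a)
  obtain ⟨φ, hφ⟩ := hG.exists_extension hJ
  exact ⟨φ, ValHom.ext (AddMonoidHom.ext fun a => hφ _ ⟨a, rfl⟩)⟩

theorem IsHeightValued.exists_valHom_apply_eq {A J : ValGroup p n} (hJ : IsHeightValued J)
    {x : A.B} {u : J.B} (hu : p • u = 0) (hle : A.v x ≤ J.v u) :
    ∃ φ : ValHom A J, φ.f x = u := by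
  let G : AddSubgroup (A.B × J.B) := (A.filtration (A.v x + 1)).prod ⊥
  have hG : IsPartialHom G := fun z hz => by
    rw [AddSubgroup.mem_bot.mp hz.2, J.v_zero]
    exact le_top
  have hxu : p • (x, u) ∈ G := ⟨A.v_add_one_le_v_smul x, AddSubgroup.mem_bot.mpr hu⟩
  have hx_max (a : A.B) (ha : a ∈ domain G) : A.v (x + a) ≤ A.v x := by
    obtain ⟨z, ⟨hz, -⟩, rfl⟩ := ha
    by_contra! hlt
    have hx_mem : x ∈ A.filtration (A.v x + 1) :=
      (AddSubgroup.add_mem_cancel_right _ hz).mp (Order.add_one_le_of_lt hlt)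
    exact ((ENat.add_one_le_iff hlt.ne_top).mp hx_mem).false
  obtain ⟨φ, hφ⟩ := (hG.sup_zmultiples hxu hx_max hle).exists_extension hJ
  exact ⟨φ, hφ (x, u) (AddSubgroup.mem_sup_right (AddSubgroup.mem_zmultiples _))⟩

theorem exists_isHeightValued_v_eq (A : ValGroup p n) (x : A.B) :
    ∃ J : ValGroup p n, IsHeightValued J ∧ ∃ φ : ValHom A J, J.v (φ.f x) = A.v x := by
  rcases eq_or_ne x 0 with rfl | hx
  · exact ⟨.ofHeight Unit fun _ => rfl, .ofHeight _, 0, by simp only [map_zero, ValGroup.v_zero]⟩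
  obtain ⟨m, hm⟩ := ENat.ne_top_iff_exists.mp (mt A.eq_zero_of_v_eq_top hx)
  have hmn : m ≤ n - 1 := Nat.cast_le.mp (hm ▸ A.bounded x hx)
  let J : ValGroup p n :=
    .ofHeight (ZMod (p ^ (m + 1))) (pow_smul_zmod_eq_zero (Nat.succ_le_succ hmn))
  let u : ZMod (p ^ (m + 1)) := p ^ m • 1
  have hpu : p • u = 0 := by
    rw [← mul_smul, ← pow_succ', pow_smul_zmod_eq_zero le_rfl]
  have hvu : J.v u = A.v x := (pHeight_pow_smul_one_zmod (Fact.out : p.Prime).one_lt m).trans hm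
  have hJ : IsHeightValued J := .ofHeight _
  obtain ⟨φ, hφ⟩ := hJ.exists_valHom_apply_eq hpu hvu.ge
  exact ⟨J, hJ, φ, by rw [hφ, hvu]⟩

theorem exists_isHeightValued_isKernelMor (A : ValGroup p n) :
    ∃ (J : ValGroup p n) (ι : ValHom A J), IsHeightValued J ∧ IsKernelMor ι := by
  choose J hJ φ hφ using exists_isHeightValued_v_eq A
  let ι : ValHom A (.pi J) :=
    ⟨AddMonoidHom.pi fun x => (φ x).f, fun a => le_iInf fun x => (φ x).le a⟩
  refine ⟨.pi J, ι, .pi hJ, isKernelMor_of_v_map_eq fun a => le_antisymm ?_ (ι.le a)⟩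
  exact (iInf_le _ a).trans (hφ a).le

theorem isHeightValued_of_isInjObj {A : ValGroup p n} (hA : IsInjObj A) : IsHeightValued A := by
  obtain ⟨J, ι, hJ, hι⟩ := exists_isHeightValued_isKernelMor A
  obtain ⟨r, hr⟩ := hA A J ι hι (ValHom.id A)
  refine isHeightValued_iff.mpr fun i x hi => ?_
  obtain ⟨y, hy⟩ := isHeightValued_iff.mp hJ i (ι.f x) (hi.trans (ι.le x))
  exact ⟨r.f y, by rw [← map_nsmul, hy]; exact ValHom.congr_fun hr x⟩

theorem isInjObj_iff_isHeightValued {A : ValGroup p n} : IsInjObj A ↔ IsHeightValued A :=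
  ⟨isHeightValued_of_isInjObj, IsHeightValued.isInjObj⟩

end PVal

open PVal in
/-- As an exact category, `𝒱ₚⁿ` has enough injectives; and an object `B`
is injective if and only if its valuation coincides with the `p`-height function, if and
only if `B(i) = pⁱ • B` for all `0 ≤ i ≤ n`. -/
theorem vpn_enough_injectives (p n : ℕ) (hp : p.Prime) (hn : 1 ≤ n) :
    -- enough injectives
    (∀ B : ValGroup p n, ∃ (J : ValGroup p n) (ι : ValHom B J),
      IsInjObj J ∧ IsKernelMor ι) ∧
    -- characterization of the injective objects
    (∀ B : ValGroup p n,
      (IsInjObj B ↔ ∀ x : B.B, B.v x = pHeight p x) ∧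
      (IsInjObj B ↔ ∀ i : ℕ, i ≤ n → ∀ x : B.B,
        ((i : ℕ∞) ≤ B.v x ↔ ∃ y : B.B, p ^ i • y = x))) := by
  have := Fact.mk hp
  refine ⟨fun B => ?_, fun B => ⟨isInjObj_iff_isHeightValued,
    isInjObj_iff_isHeightValued.trans (isHeightValued_iff_le hn)⟩⟩
  obtain ⟨J, ι, hJ, hι⟩ := exists_isHeightValued_isKernelMor B
  exact ⟨J, ι, hJ.isInjObj, hι⟩
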